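/- Let λ ∈ ℝ with λ ≠ 0 and let Γ : ℝ² → ℝ be smooth. Define U = [[0, λ m1, 1], [λ n1, 0, λ m2], [1, λ n2, 0]], V = [[−f1 g1, g1/λ, −g1 g2], [f1/λ, −1/λ² + f1 g1 + f2 g2, g2/λ], [−f1 f2, f2/λ, −f2 g2]], and Ṽ = −λ Γ · [[0, m1, 0], [n1, 0, m2], [0, n2, 0]]. Then the zero-curvature equation ∂ₜU − ∂ₓ(V + Ṽ) + U·(V + Ṽ) − (V + Ṽ)·U = 0 holds identically on ℝ² if and only if (u1, u2, v1, v2) satisfies: ∂ₜm1 + ∂ₓ(Γ m1) + n2(g1 g2 − Γ) + m1(f2 g2 + 2 f1 g1) = 0, ∂ₜm2 + ∂ₓ(Γ m2) − n1(g1 g2 − Γ) − m2(f1 g1 + 2 f2 g2) = 0, ∂ₜn1 + ∂ₓ(Γ n1) − m2(f1 f2 − Γ) − n1(f2 g2 + 2 f1 g1) = 0, ∂ₜn2 + ∂ₓ(Γ n2) + m1(f1 f2 − Γ) + n2(f1 g1 + 2 f2 g2) = 0. -/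

import Mathlib

/-- Partial derivative with respect to the first (space) variable. -/
noncomputable def pX (f : ℝ × ℝ → ℝ) : ℝ × ℝ → ℝ :=
  fun p => deriv (fun x => f (x, p.2)) p.1

/-- Partial derivative with respect to the second (time) variable. -/
noncomputable def pT (f : ℝ × ℝ → ℝ) : ℝ × ℝ → ℝ :=
  fun p => deriv (fun t => f (p.1, t)) p.2

/-!
Write `U = λ M + E` and `V = -λ⁻² P + λ⁻¹ F + F² (2P - 1)`, where `P` is the projection onto the
middle coordinate, `E` exchanges the outer two, and `M`, `F` are odd for the grading defined by `P`
(they map the middle line to the outer plane and back). The definitions of `m`, `n`, `f`, `g` say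
exactly that `∂ₓF = [E, F] - [M, P]`, which is the coefficient of `λ⁻¹` in `∂ₓV = [U, V]`. For
degree reasons it forces the coefficient of `λ⁰` as well, so that only `λ [M, F² (2P - 1)]` is left
of `[U, V] - ∂ₓV`. Since `Ṽ = -Γ (U - E)`, the zero-curvature equation reduces to
`λ (∂ₜM + ∂ₓ(Γ M) + [M, F² (2P - 1) + Γ E]) = 0`, whose matrix is again odd; its four entries are
the four evolution equations.
-/

section GradedAlgebra

variable {A : Type*} [Ring A]

/-- The involution `2P - 1` attached to an idempotent `P`. It commutes with the even elements of the
`ℤ/2`-grading defined by `P` and anticommutes with the odd ones. -/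
def parity (P : A) : A :=
  2 * P - 1

/-- `X` is odd for the `ℤ/2`-grading of the ring defined by an idempotent `P`: it has no component
in the corners `P A P` and `(1 - P) A (1 - P)`. -/
def IsOddFor (P X : A) : Prop :=
  P * X + X * P = X

theorem IsOddFor.parity_mul {P X : A} (hX : IsOddFor P X) :
    parity P * X = -(X * parity P) := by
  have h : P * X + X * P = X := hX
  rw [parity]
  linear_combination (norm := noncomm_ring) 2 * h

theorem IsOddFor.lie_eq_mul_parity {P X : A} (hX : IsOddFor P X) :
    ⁅X, P⁆ = X * parity P := by
  rw [Ring.lie_def, eq_sub_of_add_eq hX, parity]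
  noncomm_ring

theorem parity_mul_self_of_isIdempotentElem {P : A} (hP : IsIdempotentElem P) :
    parity P * parity P = 1 := by
  rw [parity]
  linear_combination (norm := noncomm_ring) 4 * hP.eq

theorem commute_parity {P E : A} (hE : Commute E P) : Commute E (parity P) := by
  rw [parity, two_mul]
  exact (hE.add_right hE).sub_right (Commute.one_right E)

/-- The matrix `-c⁻² P + c⁻¹ X + X² (2P - 1)` of the Lax pair that goes with `c • M + E`, as a
function of the spectral parameter `c` and of the odd element `X`. -/
def laxV {𝕜 : Type*} [Field 𝕜] [Algebra 𝕜 A] (c : 𝕜) (P X : A) : A :=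
  -((c ^ 2)⁻¹ • P) + c⁻¹ • X + X ^ 2 * parity P

end GradedAlgebra

section LaxPair

variable {𝕜 A : Type*} [NontriviallyNormedField 𝕜] [NormedRing A] [NormedAlgebra 𝕜 A]
  {F : 𝕜 → A} {x : 𝕜} {P E M : A}

theorem hasDerivAt_sq_mul_parity (hP : IsIdempotentElem P) (hE : Commute E P)
    (hM : IsOddFor P M) (hFx : IsOddFor P (F x)) (hF : HasDerivAt F (⁅E, F x⁆ - ⁅M, P⁆) x) :
    HasDerivAt (fun y => F y ^ 2 * parity P) (⁅E, F x ^ 2 * parity P⁆ + ⁅M, F x⁆) x := by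
  rw [hM.lie_eq_mul_parity] at hF
  have hJ := parity_mul_self_of_isIdempotentElem hP
  have hJF := hFx.parity_mul
  have hEJ := commute_parity hE
  generalize parity P = J at hF hJ hJF hEJ ⊢
  have hJFJ : J * F x * J = -F x := by rw [hJF, neg_mul, mul_assoc, hJ, mul_one]
  simp only [sq]
  refine ((hF.mul hF).mul_const J).congr_deriv ?_
  calc ((⁅E, F x⁆ - M * J) * F x + F x * (⁅E, F x⁆ - M * J)) * J
      = E * (F x * F x * J) - F x * F x * (E * J) - M * (J * F x * J) - F x * M * (J * J) := by
        rw [Ring.lie_def]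
        noncomm_ring
    _ = ⁅E, F x * F x * J⁆ + ⁅M, F x⁆ := by
        rw [hEJ.eq, hJFJ, hJ, Ring.lie_def, Ring.lie_def]
        noncomm_ring

theorem hasDerivAt_laxV {c : 𝕜} (hc : c ≠ 0) (hP : IsIdempotentElem P) (hE : Commute E P)
    (hM : IsOddFor P M) (hFx : IsOddFor P (F x)) (hF : HasDerivAt F (⁅E, F x⁆ - ⁅M, P⁆) x) :
    HasDerivAt (fun y => laxV c P (F y))
      (⁅c • M + E, laxV c P (F x)⁆ - c • ⁅M, F x ^ 2 * parity P⁆) x := by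
  refine (((hF.const_smul c⁻¹).const_add (-((c ^ 2)⁻¹ • P))).add
    (hasDerivAt_sq_mul_parity hP hE hM hFx hF)).congr_deriv ?_
  have hEP : E * P = P * E := hE
  simp only [laxV, Ring.lie_def, mul_add, add_mul, mul_neg, neg_mul, mul_smul_comm,
    smul_mul_assoc, hEP]
  match_scalars <;> field_simp <;> ring

end LaxPair

section PartialDerivatives

variable {f : ℝ × ℝ → ℝ}

theorem hasDerivAt_pX (hf : Differentiable ℝ f) (p : ℝ × ℝ) :
    HasDerivAt (fun x => f (x, p.2)) (pX f p) p.1 := by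
  have h : DifferentiableAt ℝ (fun x => f (x, p.2)) p.1 := by fun_prop
  exact h.hasDerivAt

theorem pX_eq_fderiv (hf : Differentiable ℝ f) : pX f = fun p => fderiv ℝ f p (1, 0) := by
  funext p
  have hline : HasDerivAt (fun x : ℝ => (x, p.2)) ((1 : ℝ), (0 : ℝ)) p.1 :=
    (hasDerivAt_id p.1).prodMk (hasDerivAt_const p.1 p.2)
  exact ((hf p).hasFDerivAt.comp_hasDerivAt p.1 hline).deriv

theorem contDiff_pX {k l : WithTop ℕ∞} (hf : ContDiff ℝ l f) (hkl : k + 1 ≤ l) :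
    ContDiff ℝ k (pX f) := by
  rw [pX_eq_fderiv ((hf.of_le hkl).differentiable (by simp))]
  exact (hf.fderiv_right hkl).clm_apply contDiff_const

theorem differentiable_sub_pX_pX (hf : ContDiff ℝ 3 f) :
    Differentiable ℝ fun p => f p - pX (pX f) p := by
  have hfxx : ContDiff ℝ 1 (pX (pX f)) :=
    contDiff_pX (contDiff_pX (k := 2) hf (by norm_num)) (by norm_num)
  exact (hf.differentiable (by simp)).sub (hfxx.differentiable (by simp))

theorem hasDerivAt_add_pX {g : ℝ × ℝ → ℝ} (hf : Differentiable ℝ f) (hg : ContDiff ℝ 2 g)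
    (p : ℝ × ℝ) :
    HasDerivAt (fun x => f (x, p.2) + pX g (x, p.2)) (pX f p + pX (pX g) p) p.1 :=
  (hasDerivAt_pX hf p).add (hasDerivAt_pX
    ((contDiff_pX (k := 1) hg (by norm_num)).differentiable (by simp)) p)

theorem hasDerivAt_sub_pX {g : ℝ × ℝ → ℝ} (hf : Differentiable ℝ f) (hg : ContDiff ℝ 2 g)
    (p : ℝ × ℝ) :
    HasDerivAt (fun x => f (x, p.2) - pX g (x, p.2)) (pX f p - pX (pX g) p) p.1 :=
  (hasDerivAt_pX hf p).sub (hasDerivAt_pX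
    ((contDiff_pX (k := 1) hg (by norm_num)).differentiable (by simp)) p)

end PartialDerivatives

section ZeroCurvature

variable {n : Type*} [Fintype n]

/-- The curvature `∂ₜU - ∂ₓA + [U, A]` of the connection with matrices `U` (in `x`) and `A`
(in `t`); the partial derivatives are taken entrywise. -/
noncomputable def curvature (U A : ℝ × ℝ → Matrix n n ℝ) (p : ℝ × ℝ) : Matrix n n ℝ :=
  Matrix.of fun i j =>
    pT (fun q => U q i j) p - pX (fun q => A q i j) p + (U p * A p - A p * U p) i j

variable [DecidableEq n]

open scoped Matrix.Norms.Operator in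
theorem hasDerivAt_laxV_apply {F : ℝ → Matrix n n ℝ} {x c : ℝ} {P E M : Matrix n n ℝ}
    (hc : c ≠ 0) (hP : IsIdempotentElem P) (hE : Commute E P)
    (hM : IsOddFor P M) (hFx : IsOddFor P (F x))
    (hF : ∀ i j, HasDerivAt (fun y => F y i j) ((⁅E, F x⁆ - ⁅M, P⁆) i j) x) (i j : n) :
    HasDerivAt (fun y => laxV c P (F y) i j)
      ((⁅c • M + E, laxV c P (F x)⁆ - c • ⁅M, F x ^ 2 * parity P⁆) i j) x := by
  have hFmat : HasDerivAt F (⁅E, F x⁆ - ⁅M, P⁆) x :=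
    hasDerivAt_pi.2 fun i => hasDerivAt_pi.2 (hF i)
  exact hasDerivAt_pi.1 (hasDerivAt_pi.1 (hasDerivAt_laxV hc hP hE hM hFx hFmat) i) j

theorem curvature_laxV {M F : ℝ × ℝ → Matrix n n ℝ} {Γ : ℝ × ℝ → ℝ} {P E : Matrix n n ℝ} {c : ℝ}
    {p : ℝ × ℝ} (hc : c ≠ 0) (hP : IsIdempotentElem P) (hE : Commute E P)
    (hM : IsOddFor P (M p)) (hFp : IsOddFor P (F p))
    (hF : ∀ i j, HasDerivAt (fun x => F (x, p.2) i j) ((⁅E, F p⁆ - ⁅M p, P⁆) i j) p.1)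
    (hΓM : ∀ i j, DifferentiableAt ℝ (fun x => Γ (x, p.2) * M (x, p.2) i j) p.1) :
    curvature (fun q => c • M q + E) (fun q => laxV c P (F q) + (-c * Γ q) • M q) p =
      c • ((Matrix.of fun i j => pT (fun q => M q i j) p + pX (fun q => Γ q * M q i j) p) +
        ⁅M p, F p ^ 2 * parity P + Γ p • E⁆) := by
  ext i j
  have hU : pT (fun q => (c • M q + E) i j) p = c * pT (fun q => M q i j) p := by
    simp [pT]
  have hA : pX (fun q => (laxV c P (F q) + (-c * Γ q) • M q) i j) p =
      (⁅c • M p + E, laxV c P (F p)⁆ - c • ⁅M p, F p ^ 2 * parity P⁆) i j +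
        -c * pX (fun q => Γ q * M q i j) p := by
    simp only [Matrix.add_apply, Matrix.smul_apply, smul_eq_mul, mul_assoc]
    exact ((hasDerivAt_laxV_apply hc hP hE hM hFp hF i j).add
      ((hΓM i j).hasDerivAt.const_mul (-c))).deriv
  have hcomm : (c • M p + E) * (laxV c P (F p) + (-c * Γ p) • M p) -
      (laxV c P (F p) + (-c * Γ p) • M p) * (c • M p + E) =
      ⁅c • M p + E, laxV c P (F p)⁆ + c • ⁅M p, Γ p • E⁆ := by
    simp only [Ring.lie_def, mul_add, add_mul, mul_smul_comm, smul_mul_assoc]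
    module
  have hlie : ⁅M p, F p ^ 2 * parity P + Γ p • E⁆ =
      ⁅M p, F p ^ 2 * parity P⁆ + ⁅M p, Γ p • E⁆ := by
    simp only [Ring.lie_def, mul_add, add_mul]
    abel
  rw [curvature, Matrix.of_apply, hU, hA, hcomm, hlie]
  simp only [Matrix.add_apply, Matrix.sub_apply, Matrix.smul_apply, Matrix.of_apply, smul_eq_mul]
  ring

end ZeroCurvature

section ThreeByThree

variable {R : Type*} [CommRing R]

/-- The projection of `R³` onto the middle coordinate. -/
def middleProj : Matrix (Fin 3) (Fin 3) R :=
  !![0, 0, 0; 0, 1, 0; 0, 0, 0]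

/-- The matrix exchanging the two outer coordinates of `R³` and killing the middle one. -/
def outerSwap : Matrix (Fin 3) (Fin 3) R :=
  !![0, 0, 1; 0, 0, 0; 1, 0, 0]

/-- The general element of `Matrix (Fin 3) (Fin 3) R` that is odd for `middleProj`. -/
def oddMatrix (a b c d : R) : Matrix (Fin 3) (Fin 3) R :=
  !![0, a, 0; b, 0, c; 0, d, 0]

theorem parity_middleProj :
    parity middleProj = (!![-1, 0, 0; 0, 1, 0; 0, 0, -1] : Matrix (Fin 3) (Fin 3) R) := by
  ext i j
  fin_cases i <;> fin_cases j <;> simp [parity, two_mul, middleProj]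

theorem isIdempotentElem_middleProj :
    IsIdempotentElem (middleProj : Matrix (Fin 3) (Fin 3) R) := by
  ext i j
  fin_cases i <;> fin_cases j <;> simp [middleProj]

theorem commute_outerSwap_middleProj :
    Commute (outerSwap : Matrix (Fin 3) (Fin 3) R) middleProj := by
  ext i j
  fin_cases i <;> fin_cases j <;> simp [outerSwap, middleProj]

theorem isOddFor_oddMatrix (a b c d : R) : IsOddFor middleProj (oddMatrix a b c d) := by
  ext i j
  fin_cases i <;> fin_cases j <;> simp [middleProj, oddMatrix]

theorem oddMatrix_add (a b c d a' b' c' d' : R) :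
    oddMatrix a b c d + oddMatrix a' b' c' d' = oddMatrix (a + a') (b + b') (c + c') (d + d') := by
  simp [oddMatrix]

theorem oddMatrix_eq_zero_iff {a b c d : R} :
    oddMatrix a b c d = 0 ↔ a = 0 ∧ c = 0 ∧ b = 0 ∧ d = 0 := by
  simp [← Matrix.ext_iff, Fin.forall_fin_succ, oddMatrix, and_assoc, and_left_comm]

theorem lie_outerSwap_sub_lie_middleProj (a b c d a' b' c' d' : R) :
    ⁅(outerSwap : Matrix (Fin 3) (Fin 3) R), oddMatrix a b c d⁆ -
      ⁅oddMatrix a' b' c' d', middleProj⁆ =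
      oddMatrix (d - a') (b' - c) (c' - b) (a - d') := by
  ext i j
  fin_cases i <;> fin_cases j <;> simp [Ring.lie_def, outerSwap, middleProj, oddMatrix] <;> ring

theorem oddMatrix_sq_mul_parity (a b c d : R) :
    oddMatrix a b c d ^ 2 * parity middleProj =
      !![-(b * a), 0, -(a * c); 0, b * a + d * c, 0; -(b * d), 0, -(d * c)] := by
  rw [parity_middleProj]
  ext i j
  fin_cases i <;> fin_cases j <;> simp [sq, oddMatrix] <;> ring

theorem lie_oddMatrix_sq_mul_parity_add (a b c d a' b' c' d' γ : R) :
    ⁅oddMatrix a b c d, oddMatrix a' b' c' d' ^ 2 * parity middleProj + γ • outerSwap⁆ =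
      oddMatrix (d * (a' * c' - γ) + a * (d' * c' + 2 * b' * a'))
        (-c * (b' * d' - γ) - b * (d' * c' + 2 * b' * a'))
        (-b * (a' * c' - γ) - c * (b' * a' + 2 * d' * c'))
        (a * (b' * d' - γ) + d * (b' * a' + 2 * d' * c')) := by
  rw [oddMatrix_sq_mul_parity]
  ext i j
  fin_cases i <;> fin_cases j <;> simp [Ring.lie_def, oddMatrix, outerSwap] <;> ring

theorem smul_oddMatrix_add_outerSwap (k a b c d : R) :
    k • oddMatrix a b c d + outerSwap = !![0, k * a, 1; k * b, 0, k * c; 1, k * d, 0] := by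
  simp [oddMatrix, outerSwap]

theorem laxV_oddMatrix {K : Type*} [Field K] (k a b c d : K) :
    laxV k middleProj (oddMatrix a b c d) =
      !![-(b * a), a / k, -(a * c);
         b / k, -(1 / k ^ 2) + b * a + d * c, c / k;
         -(b * d), d / k, -(d * c)] := by
  rw [laxV, oddMatrix_sq_mul_parity]
  ext i j
  fin_cases i <;> fin_cases j <;> simp [oddMatrix, middleProj, div_eq_inv_mul, add_assoc]

end ThreeByThree

section EvolutionEquations

theorem hasDerivAt_oddMatrix_apply {a b c d : ℝ → ℝ} {a' b' c' d' x : ℝ}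
    (ha : HasDerivAt a a' x) (hb : HasDerivAt b b' x) (hc : HasDerivAt c c' x)
    (hd : HasDerivAt d d' x) (i j : Fin 3) :
    HasDerivAt (fun y => oddMatrix (a y) (b y) (c y) (d y) i j) (oddMatrix a' b' c' d' i j) x := by
  fin_cases i <;> fin_cases j <;> first | assumption | exact hasDerivAt_const x (0 : ℝ)

theorem pT_add_pX_mul_oddMatrix (Γ a b c d : ℝ × ℝ → ℝ) (p : ℝ × ℝ) :
    (Matrix.of fun i j => pT (fun q => oddMatrix (a q) (b q) (c q) (d q) i j) p +
        pX (fun q => Γ q * oddMatrix (a q) (b q) (c q) (d q) i j) p) =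
      oddMatrix (pT a p + pX (fun q => Γ q * a q) p) (pT b p + pX (fun q => Γ q * b q) p)
        (pT c p + pX (fun q => Γ q * c q) p) (pT d p + pX (fun q => Γ q * d q) p) := by
  ext i j
  fin_cases i <;> fin_cases j <;> simp [oddMatrix, pT, pX]

theorem curvature_oddMatrix {m1 m2 n1 n2 f1 f2 g1 g2 Γ : ℝ × ℝ → ℝ} {lam : ℝ} (hlam : lam ≠ 0)
    (hm1 : Differentiable ℝ m1) (hm2 : Differentiable ℝ m2) (hn1 : Differentiable ℝ n1)
    (hn2 : Differentiable ℝ n2) (hΓ : Differentiable ℝ Γ) {p : ℝ × ℝ}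
    (hg1 : HasDerivAt (fun x => g1 (x, p.2)) (f2 p - m1 p) p.1)
    (hf1 : HasDerivAt (fun x => f1 (x, p.2)) (n1 p - g2 p) p.1)
    (hg2 : HasDerivAt (fun x => g2 (x, p.2)) (m2 p - f1 p) p.1)
    (hf2 : HasDerivAt (fun x => f2 (x, p.2)) (g1 p - n2 p) p.1) :
    curvature (fun q => lam • oddMatrix (m1 q) (n1 q) (m2 q) (n2 q) + outerSwap)
        (fun q => laxV lam middleProj (oddMatrix (g1 q) (f1 q) (g2 q) (f2 q)) +
          (-lam * Γ q) • oddMatrix (m1 q) (n1 q) (m2 q) (n2 q)) p =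
      lam • oddMatrix
        (pT m1 p + pX (fun q => Γ q * m1 q) p + n2 p * (g1 p * g2 p - Γ p)
          + m1 p * (f2 p * g2 p + 2 * f1 p * g1 p))
        (pT n1 p + pX (fun q => Γ q * n1 q) p - m2 p * (f1 p * f2 p - Γ p)
          - n1 p * (f2 p * g2 p + 2 * f1 p * g1 p))
        (pT m2 p + pX (fun q => Γ q * m2 q) p - n1 p * (g1 p * g2 p - Γ p)
          - m2 p * (f1 p * g1 p + 2 * f2 p * g2 p))
        (pT n2 p + pX (fun q => Γ q * n2 q) p + m1 p * (f1 p * f2 p - Γ p)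
          + n2 p * (f1 p * g1 p + 2 * f2 p * g2 p)) := by
  have hΓM : ∀ i j, DifferentiableAt ℝ (fun x => Γ (x, p.2) *
      oddMatrix (m1 (x, p.2)) (n1 (x, p.2)) (m2 (x, p.2)) (n2 (x, p.2)) i j) p.1 := fun i j =>
    DifferentiableAt.mul (by fun_prop) (hasDerivAt_oddMatrix_apply (hasDerivAt_pX hm1 p)
      (hasDerivAt_pX hn1 p) (hasDerivAt_pX hm2 p) (hasDerivAt_pX hn2 p) i j).differentiableAt
  rw [curvature_laxV hlam isIdempotentElem_middleProj commute_outerSwap_middleProj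
    (isOddFor_oddMatrix _ _ _ _) (isOddFor_oddMatrix _ _ _ _) ?_ hΓM, pT_add_pX_mul_oddMatrix,
    lie_oddMatrix_sq_mul_parity_add, oddMatrix_add]
  · congr 2 <;> ring
  · rw [lie_outerSwap_sub_lie_middleProj]
    exact hasDerivAt_oddMatrix_apply hg1 hf1 hg2 hf2

end EvolutionEquations

theorem stmt_2_general
    (u1 u2 v1 v2 Γ : ℝ × ℝ → ℝ)
    (hu1 : ContDiff ℝ 3 u1) (hu2 : ContDiff ℝ 3 u2)
    (hv1 : ContDiff ℝ 3 v1) (hv2 : ContDiff ℝ 3 v2)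
    (hΓ : Differentiable ℝ Γ)
    (lam : ℝ) (hlam : lam ≠ 0)
    (m1 m2 n1 n2 f1 f2 g1 g2 : ℝ × ℝ → ℝ)
    (hm1 : m1 = fun p => u1 p - pX (pX u1) p)
    (hm2 : m2 = fun p => u2 p - pX (pX u2) p)
    (hn1 : n1 = fun p => v1 p - pX (pX v1) p)
    (hn2 : n2 = fun p => v2 p - pX (pX v2) p)
    (hf1 : f1 = fun p => u2 p - pX v1 p)
    (hf2 : f2 = fun p => u1 p + pX v2 p)
    (hg1 : g1 = fun p => v2 p + pX u1 p)
    (hg2 : g2 = fun p => v1 p - pX u2 p)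
    (U V W : ℝ × ℝ → Matrix (Fin 3) (Fin 3) ℝ)
    (hU : U = fun p => !![0, lam * m1 p, 1;
                          lam * n1 p, 0, lam * m2 p;
                          1, lam * n2 p, 0])
    (hV : V = fun p => !![-(f1 p * g1 p), g1 p / lam, -(g1 p * g2 p);
                          f1 p / lam, -(1 / lam ^ 2) + f1 p * g1 p + f2 p * g2 p, g2 p / lam;
                          -(f1 p * f2 p), f2 p / lam, -(f2 p * g2 p)])
    (hW : W = fun p => (-lam * Γ p) • !![0, m1 p, 0;
                                         n1 p, 0, m2 p;
                                         0, n2 p, 0]) :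
    (∀ p : ℝ × ℝ, ∀ i j : Fin 3,
        pT (fun q => U q i j) p - pX (fun q => V q i j + W q i j) p
          + (U p * (V p + W p) - (V p + W p) * U p) i j = 0)
    ↔
    (∀ p : ℝ × ℝ,
        pT m1 p + pX (fun q => Γ q * m1 q) p + n2 p * (g1 p * g2 p - Γ p)
          + m1 p * (f2 p * g2 p + 2 * f1 p * g1 p) = 0 ∧
        pT m2 p + pX (fun q => Γ q * m2 q) p - n1 p * (g1 p * g2 p - Γ p)
          - m2 p * (f1 p * g1 p + 2 * f2 p * g2 p) = 0 ∧
        pT n1 p + pX (fun q => Γ q * n1 q) p - m2 p * (f1 p * f2 p - Γ p)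
          - n1 p * (f2 p * g2 p + 2 * f1 p * g1 p) = 0 ∧
        pT n2 p + pX (fun q => Γ q * n2 q) p + m1 p * (f1 p * f2 p - Γ p)
          + n2 p * (f1 p * g1 p + 2 * f2 p * g2 p) = 0) := by
  have hu1_diff := hu1.differentiable (by simp)
  have hu2_diff := hu2.differentiable (by simp)
  have hv1_diff := hv1.differentiable (by simp)
  have hv2_diff := hv2.differentiable (by simp)
  have hle : (2 : WithTop ℕ∞) ≤ 3 := by norm_num
  refine forall_congr' fun p => ?_
  have hf1x : HasDerivAt (fun x => f1 (x, p.2)) (n1 p - g2 p) p.1 := by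
    simpa [hf1, hn1, hg2] using hasDerivAt_sub_pX hu2_diff (hv1.of_le hle) p
  have hf2x : HasDerivAt (fun x => f2 (x, p.2)) (g1 p - n2 p) p.1 := by
    simpa [hf2, hn2, hg1] using hasDerivAt_add_pX hu1_diff (hv2.of_le hle) p
  have hg1x : HasDerivAt (fun x => g1 (x, p.2)) (f2 p - m1 p) p.1 := by
    simpa [hg1, hf2, hm1] using hasDerivAt_add_pX hv2_diff (hu1.of_le hle) p
  have hg2x : HasDerivAt (fun x => g2 (x, p.2)) (m2 p - f1 p) p.1 := by
    simpa [hg2, hm2, hf1] using hasDerivAt_sub_pX hv1_diff (hu2.of_le hle) p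
  have hcurv := curvature_oddMatrix hlam (hm1 ▸ differentiable_sub_pX_pX hu1)
    (hm2 ▸ differentiable_sub_pX_pX hu2) (hn1 ▸ differentiable_sub_pX_pX hv1)
    (hn2 ▸ differentiable_sub_pX_pX hv2) hΓ hg1x hf1x hg2x hf2x
  simp only [smul_oddMatrix_add_outerSwap, laxV_oddMatrix] at hcurv
  subst hU hV hW
  rw [← oddMatrix_eq_zero_iff, ← smul_eq_zero_iff_right hlam, ← hcurv]
  exact Matrix.ext_iff

theorem stmt_2
    (u1 u2 v1 v2 Γ : ℝ × ℝ → ℝ)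
    (hu1 : ContDiff ℝ (⊤ : ℕ∞) u1) (hu2 : ContDiff ℝ (⊤ : ℕ∞) u2)
    (hv1 : ContDiff ℝ (⊤ : ℕ∞) v1) (hv2 : ContDiff ℝ (⊤ : ℕ∞) v2)
    (hΓ : ContDiff ℝ (⊤ : ℕ∞) Γ)
    (lam : ℝ) (hlam : lam ≠ 0)
    (m1 m2 n1 n2 f1 f2 g1 g2 : ℝ × ℝ → ℝ)
    (hm1 : m1 = fun p => u1 p - pX (pX u1) p)
    (hm2 : m2 = fun p => u2 p - pX (pX u2) p)
    (hn1 : n1 = fun p => v1 p - pX (pX v1) p)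
    (hn2 : n2 = fun p => v2 p - pX (pX v2) p)
    (hf1 : f1 = fun p => u2 p - pX v1 p)
    (hf2 : f2 = fun p => u1 p + pX v2 p)
    (hg1 : g1 = fun p => v2 p + pX u1 p)
    (hg2 : g2 = fun p => v1 p - pX u2 p)
    (U V W : ℝ × ℝ → Matrix (Fin 3) (Fin 3) ℝ)
    (hU : U = fun p => !![0, lam * m1 p, 1;
                          lam * n1 p, 0, lam * m2 p;
                          1, lam * n2 p, 0])
    (hV : V = fun p => !![-(f1 p * g1 p), g1 p / lam, -(g1 p * g2 p);
                          f1 p / lam, -(1 / lam ^ 2) + f1 p * g1 p + f2 p * g2 p, g2 p / lam;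
                          -(f1 p * f2 p), f2 p / lam, -(f2 p * g2 p)])
    (hW : W = fun p => (-lam * Γ p) • !![0, m1 p, 0;
                                         n1 p, 0, m2 p;
                                         0, n2 p, 0]) :
    (∀ p : ℝ × ℝ, ∀ i j : Fin 3,
        pT (fun q => U q i j) p - pX (fun q => V q i j + W q i j) p
          + (U p * (V p + W p) - (V p + W p) * U p) i j = 0)
    ↔
    (∀ p : ℝ × ℝ,
        pT m1 p + pX (fun q => Γ q * m1 q) p + n2 p * (g1 p * g2 p - Γ p)
          + m1 p * (f2 p * g2 p + 2 * f1 p * g1 p) = 0 ∧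
        pT m2 p + pX (fun q => Γ q * m2 q) p - n1 p * (g1 p * g2 p - Γ p)
          - m2 p * (f1 p * g1 p + 2 * f2 p * g2 p) = 0 ∧
        pT n1 p + pX (fun q => Γ q * n1 q) p - m2 p * (f1 p * f2 p - Γ p)
          - n1 p * (f2 p * g2 p + 2 * f1 p * g1 p) = 0 ∧
        pT n2 p + pX (fun q => Γ q * n2 q) p + m1 p * (f1 p * f2 p - Γ p)
          + n2 p * (f1 p * g1 p + 2 * f2 p * g2 p) = 0) := by
  exact stmt_2_general u1 u2 v1 v2 Γ (contDiff_infty.1 hu1 3) (contDiff_infty.1 hu2 3)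
    (contDiff_infty.1 hv1 3) (contDiff_infty.1 hv2 3) (hΓ.differentiable (by simp)) lam hlam
    m1 m2 n1 n2 f1 f2 g1 g2 hm1 hm2 hn1 hn2 hf1 hf2 hg1 hg2 U V W hU hV hW
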